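/- arXiv:1107.1074 — 2 statements merged into one kernel-verified Lean document; each statement's English description precedes it below -/
import Mathlib

section
/- If d = 2, then G_λ(0, 0) ~ γ_2 ln(1/λ) as λ → 0+; that is, lim_{λ→0+} G_λ(0, 0)/ln(1/λ) = γ_2. -/
open MeasureTheory Real Filter Topology Asymptotics

/-- Fourier symbol `φ(θ) = ∑_z a(z) cos⟨z,θ⟩` of the random walk on `ℤ^d`. -/
noncomputable def phiSymb (d : ℕ) (a : (Fin d → ℤ) → ℝ) (θ : Fin d → ℝ) : ℝ :=
  ∑' z : Fin d → ℤ, a z * Real.cos (∑ i, (z i : ℝ) * θ i)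

/-- Transition probability `p(t;x,y) = (2π)^{-d} ∫_{[-π,π]^d} e^{φ(θ)t} cos⟨θ,y-x⟩ dθ`. -/
noncomputable def ptrans (d : ℕ) (a : (Fin d → ℤ) → ℝ) (t : ℝ) (x y : Fin d → ℤ) : ℝ :=
  ((2 * π) ^ d)⁻¹ *
    ∫ θ in Set.Icc (fun _ : Fin d => -π) (fun _ : Fin d => π),
      Real.exp (phiSymb d a θ * t) * Real.cos (∑ i, θ i * ((y i : ℝ) - (x i : ℝ)))

/-- Laplace transform `G_λ(x,y) = ∫_0^∞ e^{-λt} p(t;x,y) dt` (Green's function at `λ = 0`). -/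
noncomputable def Glam (d : ℕ) (a : (Fin d → ℤ) → ℝ) (lam : ℝ) (x y : Fin d → ℤ) : ℝ :=
  ∫ t in Set.Ioi (0 : ℝ), Real.exp (-lam * t) * ptrans d a t x y

/-- Hessian matrix `φ''(0)`, with entries `-∑_z a(z) z_i z_j`. -/
noncomputable def hessPhi (d : ℕ) (a : (Fin d → ℤ) → ℝ) : Matrix (Fin d) (Fin d) ℝ :=
  Matrix.of fun i j => -∑' z : Fin d → ℤ, a z * (z i : ℝ) * (z j : ℝ)

/-- `γ_d = (2π)^{-d/2} |det φ''(0)|^{-1/2}`. -/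
noncomputable def gammaConst (d : ℕ) (a : (Fin d → ℤ) → ℝ) : ℝ :=
  ((2 * π) ^ ((d : ℝ) / 2))⁻¹ * (Real.sqrt |(hessPhi d a).det|)⁻¹

/-- `ρ_d(x) = (a/(2π)^d) ∫_{[-π,π]^d} (cos⟨x,θ⟩ - 1)/φ(θ) dθ` for `x ≠ 0`, and `ρ_d(0) = 1`. -/
noncomputable def rhoConst (d : ℕ) (a : (Fin d → ℤ) → ℝ) (x : Fin d → ℤ) : ℝ :=
  if x = 0 then 1 else
    (-(a 0) / (2 * π) ^ d) *
      ∫ θ in Set.Icc (fun _ : Fin d => -π) (fun _ : Fin d => π),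
        (Real.cos (∑ i, (x i : ℝ) * θ i) - 1) / phiSymb d a θ

/-- `γ̃_d(z) = (1/(2(2π)^d)) ∫_{ℝ^d} ⟨v,z⟩² e^{⟨φ''(0)v,v⟩/2} dv`. -/
noncomputable def gammaTilde (d : ℕ) (a : (Fin d → ℤ) → ℝ) (z : Fin d → ℤ) : ℝ :=
  (2 * (2 * π) ^ d)⁻¹ *
    ∫ v : Fin d → ℝ, (∑ i, v i * (z i : ℝ)) ^ 2 *
      Real.exp ((∑ i, (hessPhi d a).mulVec v i * v i) / 2)

/-- If `t * p t → γ` at infinity, then the Laplace transform of `p` is equivalent to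
`γ * log (1 / lam)` as `lam → 0+`. -/
lemma tendsto_laplace_div_log {p : ℝ → ℝ} {γ C : ℝ} (hp : Continuous p)
    (hC : ∀ t, 0 < t → |p t| ≤ C) (htC : ∀ t, 0 < t → |t * p t| ≤ C)
    (hlim : Tendsto (fun t => t * p t) atTop (𝓝 γ)) :
    Tendsto (fun lam : ℝ => (∫ t in Set.Ioi (0 : ℝ), Real.exp (-lam * t) * p t) /
      Real.log (1 / lam)) (𝓝[>] (0 : ℝ)) (𝓝 γ) := by
  have hC0 : 0 ≤ C := (abs_nonneg _).trans (hC 1 one_pos)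
  set F : ℝ → ℝ → ℝ := fun L s =>
    Real.exp (-Real.exp (L * (s - 1))) * (Real.exp (L * s) * p (Real.exp (L * s))) with hF
  have key : ∀ L : ℝ, 0 < L →
      ∫ t in Set.Ioi (0 : ℝ), Real.exp (-Real.exp (-L) * t) * p t = L * ∫ s, F L s := by
    intro L hL
    have himg : (fun s => Real.exp (L * s)) '' Set.univ = Set.Ioi 0 := by
      ext t
      simp only [Set.image_univ, Set.mem_range, Set.mem_Ioi]
      constructor
      · rintro ⟨s, rfl⟩
        positivity
      · intro ht
        exact ⟨Real.log t / L, by rw [mul_div_cancel₀ _ hL.ne', Real.exp_log ht]⟩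
    have hder : ∀ s ∈ Set.univ, HasDerivWithinAt (fun s => Real.exp (L * s))
        (Real.exp (L * s) * L) Set.univ s := fun s _ => by
      simpa using (((hasDerivAt_id' s).const_mul L).exp).hasDerivWithinAt (s := Set.univ)
    have hinj : Set.InjOn (fun s => Real.exp (L * s)) Set.univ := fun x _ y _ h =>
      mul_left_cancel₀ hL.ne' (Real.exp_injective h)
    rw [← himg, integral_image_eq_integral_abs_deriv_smul MeasurableSet.univ hder hinj,
      setIntegral_univ, ← integral_const_mul]
    congr 1 with s
    rw [abs_of_pos (by positivity), hF]
    simp only [smul_eq_mul]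
    rw [neg_mul, ← Real.exp_add, show -L + L * s = L * (s - 1) by ring]
    ring
  have hbound_int : Integrable fun s : ℝ => C * Real.exp (1 - |s|) := by
    have : Integrable fun s : ℝ => Real.exp (-|s|) := by
      rw [← integrableOn_univ, ← Set.Iic_union_Ioi (a := (0 : ℝ))]
      refine IntegrableOn.union ?_ ?_
      · exact (integrableOn_exp_Iic 0).congr_fun
          (fun s hs => by simp [abs_of_nonpos (Set.mem_Iic.1 hs)]) measurableSet_Iic
      · exact (integrableOn_exp_neg_Ioi 0).congr_fun
          (fun s hs => by simp [abs_of_pos (Set.mem_Ioi.1 hs)]) measurableSet_Ioi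
    refine (this.const_mul (C * Real.exp 1)).congr (.of_forall fun s => ?_)
    simp only [sub_eq_add_neg, Real.exp_add]
    ring
  have hFlim : Tendsto (fun L => ∫ s, F L s) atTop
      (𝓝 (∫ s, (Set.Ioo (0 : ℝ) 1).indicator (fun _ => γ) s)) := by
    refine tendsto_integral_filter_of_dominated_convergence _ (.of_forall fun L => ?_) ?_
      hbound_int ?_
    · exact Continuous.aestronglyMeasurable (by fun_prop)
    · filter_upwards [eventually_ge_atTop 1] with L hL
      refine .of_forall fun s => ?_
      rw [hF, norm_mul, norm_of_nonneg (Real.exp_pos _).le, Real.norm_eq_abs]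
      rcases lt_or_ge s 0 with hs | hs
      · have h1 : Real.exp (-Real.exp (L * (s - 1))) ≤ 1 := by
          simpa using (Real.exp_pos _).le
        have h2 : Real.exp (L * s) ≤ Real.exp (1 - |s|) := by
          rw [abs_of_neg hs]
          exact Real.exp_le_exp.2 (by nlinarith)
        calc _ ≤ 1 * (Real.exp (L * s) * C) := by
              rw [abs_mul, abs_of_pos (Real.exp_pos _)]
              gcongr
              exact hC _ (Real.exp_pos _)
          _ ≤ _ := by
              rw [one_mul, mul_comm]
              gcongr
      · rw [mul_comm]
        gcongr
        · exact htC _ (Real.exp_pos _)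
        · rw [abs_of_nonneg hs]
          rcases le_or_gt 1 s with h | h
          · have := Real.add_one_le_exp (L * (s - 1))
            nlinarith
          · have := Real.exp_pos (L * (s - 1))
            linarith
    · have hne : ∀ᵐ s : ℝ, s ≠ 0 ∧ s ≠ 1 :=
        (Measure.ae_ne volume 0).and (Measure.ae_ne volume 1)
      filter_upwards [hne] with s ⟨h0, h1⟩
      rcases lt_or_gt_of_ne h0 with h | h
      · rw [Set.indicator_of_notMem (by simp [h.le])]
        have hz : Tendsto (fun L => Real.exp (L * s)) atTop (𝓝 0) :=
          Real.tendsto_exp_atBot.comp (tendsto_id.atTop_mul_const_of_neg h)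
        refine squeeze_zero_norm (a := fun L => Real.exp (L * s) * C) (fun L => ?_)
          (by simpa using hz.mul_const C)
        rw [hF, norm_mul, norm_of_nonneg (Real.exp_pos _).le, norm_mul,
          norm_of_nonneg (Real.exp_pos (L * s)).le, Real.norm_eq_abs]
        calc _ ≤ 1 * (Real.exp (L * s) * C) := by
              gcongr
              · simpa using (Real.exp_pos _).le
              · exact hC _ (Real.exp_pos _)
          _ = _ := one_mul _
      · have hinf : Tendsto (fun L => Real.exp (L * s)) atTop atTop :=
          Real.tendsto_exp_atTop.comp (tendsto_id.atTop_mul_const h)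
        have h2 := hlim.comp hinf
        rcases lt_or_gt_of_ne h1 with h' | h'
        · rw [Set.indicator_of_mem (by exact ⟨h, h'⟩)]
          have hz : Tendsto (fun L => Real.exp (L * (s - 1))) atTop (𝓝 0) :=
            Real.tendsto_exp_atBot.comp (tendsto_id.atTop_mul_const_of_neg (by linarith))
          simpa using ((Real.continuous_exp.tendsto _).comp hz.neg).mul h2
        · rw [Set.indicator_of_notMem (by simp [h'.le])]
          have hz : Tendsto (fun L => Real.exp (-Real.exp (L * (s - 1)))) atTop (𝓝 0) :=
            Real.tendsto_exp_neg_atTop_nhds_zero.comp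
              (Real.tendsto_exp_atTop.comp (tendsto_id.atTop_mul_const (by linarith)))
          simpa using hz.mul h2
  have hγ : ∫ s, (Set.Ioo (0 : ℝ) 1).indicator (fun _ => γ) s = γ := by
    rw [integral_indicator measurableSet_Ioo]
    simp
  rw [hγ] at hFlim
  have hlog : Tendsto (fun lam : ℝ => Real.log (1 / lam)) (𝓝[>] 0) atTop := by
    simp only [one_div]
    exact Real.tendsto_log_atTop.comp tendsto_inv_nhdsGT_zero
  refine (hFlim.comp hlog).congr' ?_
  filter_upwards [self_mem_nhdsWithin, hlog.eventually_gt_atTop 0] with lam hlam hL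
  have hlam' : Real.exp (-Real.log (1 / lam)) = lam := by
    rw [one_div, Real.log_inv, neg_neg, Real.exp_log hlam]
  have := key _ hL
  rw [hlam'] at this
  rw [this, mul_div_cancel_left₀ _ hL.ne', Function.comp_apply]

lemma pos_and_det_pos_of_quadratic {α β δ c : ℝ} (hc : 0 < c)
    (hq : ∀ x y : ℝ, c * (x ^ 2 + y ^ 2) ≤ α * x ^ 2 + 2 * β * x * y + δ * y ^ 2) :
    0 < α ∧ 0 < α * δ - β ^ 2 := by
  have hα : 0 < α := by have := hq 1 0; simp at this; linarith
  refine ⟨hα, ?_⟩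
  have h := hq (-β) α
  have : 0 < c * ((-β) ^ 2 + α ^ 2) := by positivity
  have h2 : 0 < α * (α * δ - β ^ 2) := by nlinarith
  exact pos_of_mul_pos_right h2 hα.le

lemma integral_exp_neg_quadratic {α β δ c : ℝ} (hc : 0 < c)
    (hq : ∀ x y : ℝ, c * (x ^ 2 + y ^ 2) ≤ α * x ^ 2 + 2 * β * x * y + δ * y ^ 2) :
    ∫ u : Fin 2 → ℝ, Real.exp (-(α * u 0 ^ 2 + 2 * β * u 0 * u 1 + δ * u 1 ^ 2) / 2) =
      2 * π / √(α * δ - β ^ 2) := by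
  obtain ⟨hα, hdet⟩ := pos_and_det_pos_of_quadratic hc hq
  have hmp := (volume_preserving_finTwoArrow ℝ).symm
  rw [← hmp.integral_comp (MeasurableEquiv.finTwoArrow).symm.measurableEmbedding]
  change ∫ p : ℝ × ℝ, Real.exp (-(α * p.1 ^ 2 + 2 * β * p.1 * p.2 + δ * p.2 ^ 2) / 2) = _
  have hint : Integrable fun p : ℝ × ℝ =>
      Real.exp (-(α * p.1 ^ 2 + 2 * β * p.1 * p.2 + δ * p.2 ^ 2) / 2) := by
    have h1 := integrable_exp_neg_mul_sq (half_pos hc)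
    refine (h1.mul_prod h1).mono' (Continuous.aestronglyMeasurable (by fun_prop))
      (.of_forall fun p => ?_)
    rw [Real.norm_of_nonneg (Real.exp_pos _).le, ← Real.exp_add]
    exact Real.exp_le_exp.2 (by linarith [hq p.1 p.2])
  rw [Measure.volume_eq_prod, integral_prod_symm _ hint]
  have hinner : ∀ y : ℝ,
      ∫ x : ℝ, Real.exp (-(α * x ^ 2 + 2 * β * x * y + δ * y ^ 2) / 2) =
        √(π / (α / 2)) * Real.exp (-((α * δ - β ^ 2) / (2 * α)) * y ^ 2) := fun y => by
    rw [← integral_gaussian, ← integral_mul_const,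
      ← integral_add_right_eq_self _ (-(β * y / α))]
    congr 1 with x
    rw [← Real.exp_add]
    congr 1
    field_simp
    ring
  simp only [hinner]
  rw [integral_const_mul, integral_gaussian, ← Real.sqrt_mul (by positivity),
    show π / (α / 2) * (π / ((α * δ - β ^ 2) / (2 * α))) = (2 * π) ^ 2 / (α * δ - β ^ 2) by
      field_simp,
    Real.sqrt_div (by positivity), Real.sqrt_sq (by positivity)]

section

variable {d : ℕ} {a : (Fin d → ℤ) → ℝ}

lemma hasSum_neg_phiSymb (hsum : HasSum a 0) (θ : Fin d → ℝ) :
    HasSum (fun z : Fin d → ℤ => 2 * a z * Real.sin ((∑ i, (z i : ℝ) * θ i) / 2) ^ 2)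
      (-phiSymb d a θ) := by
  have hs : Summable fun z : Fin d → ℤ => a z * Real.cos (∑ i, (z i : ℝ) * θ i) :=
    hsum.summable.abs.of_norm_bounded fun z => by
      rw [norm_mul, Real.norm_eq_abs]
      exact mul_le_of_le_one_right (abs_nonneg _) (Real.abs_cos_le_one _)
  have h := hsum.sub hs.hasSum
  rw [zero_sub] at h
  refine h.congr_fun fun z => ?_
  rw [Real.sin_sq_eq_half_sub, mul_div_cancel₀ _ two_ne_zero]
  ring

lemma continuous_phiSymb (ha : Summable a) : Continuous (phiSymb d a) :=
  continuous_tsum (fun z => by fun_prop) ha.abs fun z θ => by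
    rw [norm_mul, Real.norm_eq_abs]
    exact mul_le_of_le_one_right (abs_nonneg _) (Real.abs_cos_le_one _)

lemma mul_sin_sq_nonneg (hpos : ∀ z : Fin d → ℤ, z ≠ 0 → 0 ≤ a z) (θ : Fin d → ℝ)
    (z : Fin d → ℤ) : 0 ≤ 2 * a z * Real.sin ((∑ i, (z i : ℝ) * θ i) / 2) ^ 2 := by
  rcases eq_or_ne z 0 with rfl | hz
  · simp
  · have := hpos z hz
    positivity

lemma phiSymb_nonpos (hpos : ∀ z : Fin d → ℤ, z ≠ 0 → 0 ≤ a z) (hsum : HasSum a 0)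
    (θ : Fin d → ℝ) : phiSymb d a θ ≤ 0 :=
  neg_nonneg.1 ((hasSum_neg_phiSymb hsum θ).nonneg (mul_sin_sq_nonneg hpos θ))

lemma exists_sin_sq_le_neg_phiSymb (hpos : ∀ z : Fin d → ℤ, z ≠ 0 → 0 ≤ a z)
    (hsum : HasSum a 0) (hirr : AddSubgroup.closure {z : Fin d → ℤ | 0 < a z} = ⊤)
    (z : Fin d → ℤ) : ∃ C, 0 ≤ C ∧ ∀ θ : Fin d → ℝ,
      Real.sin ((∑ i, (z i : ℝ) * θ i) / 2) ^ 2 ≤ C * -phiSymb d a θ := by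
  have hz : z ∈ AddSubgroup.closure {z : Fin d → ℤ | 0 < a z} := hirr ▸ AddSubgroup.mem_top z
  induction hz using AddSubgroup.closure_induction with
  | mem z hz =>
    have hz : 0 < a z := hz
    refine ⟨(2 * a z)⁻¹, by positivity, fun θ => ?_⟩
    rw [← div_eq_inv_mul, le_div_iff₀ (by positivity), mul_comm]
    exact le_hasSum (hasSum_neg_phiSymb hsum θ) z fun w _ => mul_sin_sq_nonneg hpos θ w
  | zero => exact ⟨0, le_rfl, fun θ => by simp⟩
  | add x y _ _ hx hy =>
    obtain ⟨C, hC, hx⟩ := hx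
    obtain ⟨D, hD, hy⟩ := hy
    refine ⟨2 * (C + D), by positivity, fun θ => ?_⟩
    have hxy : (∑ i, ((x + y) i : ℝ) * θ i) / 2 =
        (∑ i, (x i : ℝ) * θ i) / 2 + (∑ i, (y i : ℝ) * θ i) / 2 := by
      simp [add_mul, Finset.sum_add_distrib, add_div]
    have hsin : ∀ u v : ℝ,
        Real.sin (u + v) ^ 2 ≤ 2 * (Real.sin u ^ 2 + Real.sin v ^ 2) := fun u v => by
      rw [Real.sin_add]
      nlinarith [sq_nonneg (Real.sin u * Real.cos v - Real.cos u * Real.sin v),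
        mul_nonneg (sq_nonneg (Real.sin u)) (sq_nonneg (Real.sin v)),
        Real.sin_sq_add_cos_sq u, Real.sin_sq_add_cos_sq v]
    rw [hxy]
    linarith [hsin ((∑ i, (x i : ℝ) * θ i) / 2) ((∑ i, (y i : ℝ) * θ i) / 2), hx θ, hy θ]
  | neg x _ hx =>
    obtain ⟨C, hC, hx⟩ := hx
    refine ⟨C, hC, fun θ => ?_⟩
    have : (∑ i, ((-x) i : ℝ) * θ i) / 2 = -((∑ i, (x i : ℝ) * θ i) / 2) := by
      simp [neg_div]
    rw [this, Real.sin_neg, neg_sq]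
    exact hx θ

lemma exists_phiSymb_le (hpos : ∀ z : Fin d → ℤ, z ≠ 0 → 0 ≤ a z)
    (hsum : HasSum a 0) (hirr : AddSubgroup.closure {z : Fin d → ℤ | 0 < a z} = ⊤) :
    ∃ c, 0 < c ∧ ∀ θ ∈ Set.Icc (fun _ : Fin d => -π) (fun _ : Fin d => π),
      phiSymb d a θ ≤ -(c * ∑ i, θ i ^ 2) := by
  choose C hC0 hC using fun i : Fin d =>
    exists_sin_sq_le_neg_phiSymb hpos hsum hirr (Pi.single i 1)
  have hS : 0 ≤ ∑ i, C i := Finset.sum_nonneg fun i _ => hC0 i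
  refine ⟨(π ^ 2 * (1 + ∑ i, C i))⁻¹, by positivity, fun θ hθ => ?_⟩
  have hcoord : ∀ i, θ i ^ 2 ≤ π ^ 2 * (C i * -phiSymb d a θ) := fun i => by
    have h1 := hC i θ
    simp only [Pi.single_apply, Int.cast_ite, Int.cast_one, Int.cast_zero, ite_mul, one_mul,
      zero_mul, Finset.sum_ite_eq', Finset.mem_univ, if_true] at h1
    have hle : |θ i| ≤ π := abs_le.2 ⟨hθ.1 i, hθ.2 i⟩
    have h2 := Real.mul_abs_le_abs_sin (x := θ i / 2) (by
      rw [abs_div, abs_two]; linarith)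
    have h3 : (2 / π * |θ i / 2|) ^ 2 ≤ Real.sin (θ i / 2) ^ 2 := by
      rw [← sq_abs (Real.sin _)]
      gcongr
    rw [mul_pow, sq_abs] at h3
    have h4 : θ i ^ 2 = π ^ 2 * ((2 / π) ^ 2 * (θ i / 2) ^ 2) := by
      field_simp
    rw [h4]
    exact mul_le_mul_of_nonneg_left (h3.trans h1) (by positivity)
  have hsumle : ∑ i, θ i ^ 2 ≤ π ^ 2 * (1 + ∑ i, C i) * -phiSymb d a θ := by
    calc _ ≤ ∑ i, π ^ 2 * (C i * -phiSymb d a θ) := Finset.sum_le_sum fun i _ => hcoord i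
      _ = π ^ 2 * (∑ i, C i) * -phiSymb d a θ := by
        rw [← Finset.mul_sum, ← Finset.sum_mul, mul_assoc]
      _ ≤ _ := by
        have := neg_nonneg.2 (phiSymb_nonpos hpos hsum θ)
        gcongr
        linarith
  rw [le_neg, ← div_eq_inv_mul, div_le_iff₀ (by positivity)]
  linarith

lemma tendsto_mul_sin_sq (x : ℝ) :
    Tendsto (fun t : ℝ => t * Real.sin ((√t)⁻¹ * x) ^ 2) atTop (𝓝 (x ^ 2)) := by
  have hd : HasDerivAt (fun h : ℝ => Real.sin (h * x)) x 0 := by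
    simpa using ((hasDerivAt_id (0 : ℝ)).mul_const x).sin
  have h1 := (hd.tendsto_slope_zero_right.comp
    (tendsto_inv_atTop_nhdsGT_zero.comp Real.tendsto_sqrt_atTop)).pow 2
  refine h1.congr' ?_
  filter_upwards [eventually_ge_atTop 0] with t ht
  simp [mul_pow, Real.sq_sqrt ht]

lemma summable_mul_sq (hvar : Summable fun z : Fin d → ℤ => (∑ i, ((z i : ℝ)) ^ 2) * a z)
    (u : Fin d → ℝ) : Summable fun z : Fin d → ℤ => |a z| * (∑ i, (z i : ℝ) * u i) ^ 2 := by
  refine (hvar.abs.mul_left (∑ i, u i ^ 2)).of_nonneg_of_le (fun z => by positivity) fun z => ?_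
  rw [abs_mul, abs_of_nonneg (by positivity : 0 ≤ ∑ i, (z i : ℝ) ^ 2)]
  have := Finset.sum_mul_sq_le_sq_mul_sq Finset.univ (fun i => (z i : ℝ)) u
  nlinarith [abs_nonneg (a z)]

lemma tendsto_mul_phiSymb (hsum : HasSum a 0)
    (hvar : Summable fun z : Fin d → ℤ => (∑ i, ((z i : ℝ)) ^ 2) * a z) (u : Fin d → ℝ) :
    Tendsto (fun t : ℝ => phiSymb d a ((√t)⁻¹ • u) * t) atTop
      (𝓝 (-(∑' z : Fin d → ℤ, a z * (∑ i, (z i : ℝ) * u i) ^ 2) / 2)) := by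
  have harg : ∀ (t : ℝ) (z : Fin d → ℤ), (∑ i, (z i : ℝ) * ((√t)⁻¹ • u) i) / 2 =
      (√t)⁻¹ * ((∑ i, (z i : ℝ) * u i) / 2) := fun t z => by
    simp only [Pi.smul_apply, smul_eq_mul, mul_left_comm _ (√t)⁻¹, ← Finset.mul_sum, mul_div_assoc]
  have h : Tendsto (fun t : ℝ => ∑' z : Fin d → ℤ,
      2 * a z * (t * Real.sin ((√t)⁻¹ * ((∑ i, (z i : ℝ) * u i) / 2)) ^ 2)) atTop
      (𝓝 (∑' z : Fin d → ℤ, 2 * a z * ((∑ i, (z i : ℝ) * u i) / 2) ^ 2)) := by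
    refine tendsto_tsum_of_dominated_convergence (summable_mul_sq hvar u)
      (fun z => (tendsto_mul_sin_sq _).const_mul _) ?_
    filter_upwards [eventually_gt_atTop 0] with t ht z
    have h1 : t * Real.sin ((√t)⁻¹ * ((∑ i, (z i : ℝ) * u i) / 2)) ^ 2 ≤
        (∑ i, (z i : ℝ) * u i) ^ 2 / 4 := by
      calc _ ≤ t * ((√t)⁻¹ * ((∑ i, (z i : ℝ) * u i) / 2)) ^ 2 := by
            gcongr ?_ * ?_
            exact Real.sin_sq_le_sq
        _ = _ := by
            rw [mul_pow, inv_pow, Real.sq_sqrt ht.le]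
            field_simp
            norm_num
    have h0 : 0 ≤ t * Real.sin ((√t)⁻¹ * ((∑ i, (z i : ℝ) * u i) / 2)) ^ 2 := by positivity
    rw [norm_mul, norm_mul, Real.norm_eq_abs (a z), Real.norm_of_nonneg h0, Real.norm_two]
    nlinarith [abs_nonneg (a z), sq_nonneg (∑ i, (z i : ℝ) * u i)]
  convert h.neg using 1
  · ext t
    rw [← neg_neg (phiSymb d a _), ← (hasSum_neg_phiSymb hsum _).tsum_eq, neg_mul,
      ← tsum_mul_right]
    simp only [harg]
    congr 2 with z
    ring
  · rw [neg_div, ← tsum_div_const]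
    congr 3 with z
    ring

lemma ptrans_self (t : ℝ) (x : Fin d → ℤ) : ptrans d a t x x =
    ((2 * π) ^ d)⁻¹ * ∫ θ in Set.Icc (fun _ : Fin d => -π) (fun _ : Fin d => π),
      Real.exp (phiSymb d a θ * t) := by
  simp [ptrans]

lemma continuous_ptrans_self (ha : Summable a) (x : Fin d → ℤ) :
    Continuous fun t => ptrans d a t x x := by
  have hφ := continuous_phiSymb ha
  simp only [ptrans_self]
  refine continuous_const.mul (continuous_parametric_integral_of_continuous ?_ isCompact_Icc)
  simp only [Function.uncurry_def]
  fun_prop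

lemma abs_ptrans_self_le (hpos : ∀ z : Fin d → ℤ, z ≠ 0 → 0 ≤ a z) (hsum : HasSum a 0)
    (x : Fin d → ℤ) {t : ℝ} (ht : 0 ≤ t) : |ptrans d a t x x| ≤ ((2 * π) ^ d)⁻¹ *
      volume.real (Set.Icc (fun _ : Fin d => -π) (fun _ : Fin d => π)) := by
  rw [ptrans_self, abs_mul, abs_of_pos (by positivity)]
  gcongr
  rw [← one_mul (volume.real _), ← Real.norm_eq_abs]
  refine norm_setIntegral_le_of_norm_le_const isCompact_Icc.measure_lt_top fun θ _ => ?_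
  rw [Real.norm_of_nonneg (Real.exp_pos _).le, Real.exp_le_one_iff]
  exact mul_nonpos_of_nonpos_of_nonneg (phiSymb_nonpos hpos hsum θ) ht

lemma sqrt_pow_mul_ptrans_self {t : ℝ} (ht : 0 < t) (x : Fin d → ℤ) :
    √t ^ d * ptrans d a t x x = ((2 * π) ^ d)⁻¹ * ∫ u : Fin d → ℝ,
      (Set.Icc (fun _ : Fin d => -π) (fun _ : Fin d => π)).indicator
        (fun θ => Real.exp (phiSymb d a θ * t)) ((√t)⁻¹ • u) := by
  rw [Measure.integral_comp_smul volume
      ((Set.Icc (fun _ : Fin d => -π) (fun _ : Fin d => π)).indicator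
        (fun θ => Real.exp (phiSymb d a θ * t))) (√t)⁻¹,
    integral_indicator measurableSet_Icc, ptrans_self, Module.finrank_fin_fun, inv_pow, inv_inv,
    abs_of_nonneg (by positivity), smul_eq_mul]
  ring

lemma integrable_exp_neg_mul_sum_sq {c : ℝ} (hc : 0 < c) :
    Integrable fun u : Fin d → ℝ => Real.exp (-(c * ∑ i, u i ^ 2)) := by
  have := Integrable.fintype_prod (μ := fun _ : Fin d => (volume : Measure ℝ))
    (f := fun (_ : Fin d) (v : ℝ) => Real.exp (-c * v ^ 2))
    fun _ => integrable_exp_neg_mul_sq hc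
  simpa only [← Real.exp_sum, ← Finset.mul_sum, neg_mul, Finset.sum_neg_distrib] using! this

lemma indicator_exp_phiSymb_le {c : ℝ}
    (hc : ∀ θ ∈ Set.Icc (fun _ : Fin d => -π) (fun _ : Fin d => π),
      phiSymb d a θ ≤ -(c * ∑ i, θ i ^ 2)) {t : ℝ} (ht : 0 < t) (u : Fin d → ℝ) :
    ‖(Set.Icc (fun _ : Fin d => -π) (fun _ : Fin d => π)).indicator
        (fun θ => Real.exp (phiSymb d a θ * t)) ((√t)⁻¹ • u)‖ ≤
      Real.exp (-(c * ∑ i, u i ^ 2)) := by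
  by_cases h : (√t)⁻¹ • u ∈ Set.Icc (fun _ : Fin d => -π) (fun _ : Fin d => π)
  · rw [Set.indicator_of_mem h, Real.norm_of_nonneg (Real.exp_pos _).le, Real.exp_le_exp]
    calc _ ≤ -(c * ∑ i, ((√t)⁻¹ • u) i ^ 2) * t := by
          gcongr
          exact hc _ h
      _ = _ := by
          simp only [Pi.smul_apply, smul_eq_mul, mul_pow, inv_pow, Real.sq_sqrt ht.le,
            ← Finset.mul_sum]
          field_simp
  · rw [Set.indicator_of_notMem h, norm_zero]
    positivity

lemma abs_sqrt_pow_mul_ptrans_self_le {c : ℝ} (hc0 : 0 < c)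
    (hc : ∀ θ ∈ Set.Icc (fun _ : Fin d => -π) (fun _ : Fin d => π),
      phiSymb d a θ ≤ -(c * ∑ i, θ i ^ 2)) (x : Fin d → ℤ) {t : ℝ} (ht : 0 < t) :
    |√t ^ d * ptrans d a t x x| ≤
      ((2 * π) ^ d)⁻¹ * ∫ u : Fin d → ℝ, Real.exp (-(c * ∑ i, u i ^ 2)) := by
  rw [sqrt_pow_mul_ptrans_self ht, abs_mul, abs_of_pos (by positivity)]
  gcongr
  exact norm_integral_le_of_norm_le (integrable_exp_neg_mul_sum_sq hc0)
    (.of_forall (indicator_exp_phiSymb_le hc ht))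

lemma eventually_inv_sqrt_smul_mem (u : Fin d → ℝ) : ∀ᶠ t : ℝ in atTop,
    (√t)⁻¹ • u ∈ Set.Icc (fun _ : Fin d => -π) (fun _ : Fin d => π) := by
  have h : Tendsto (fun t : ℝ => (√t)⁻¹ • u) atTop (𝓝 0) := by
    simpa using (tendsto_inv_atTop_zero.comp Real.tendsto_sqrt_atTop).smul_const u
  exact h.eventually (pi_Icc_mem_nhds' (fun _ => by simp [Real.pi_pos])
    (fun _ => by simp [Real.pi_pos]))

lemma tendsto_sqrt_pow_mul_ptrans_self (hsum : HasSum a 0)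
    (hvar : Summable fun z : Fin d → ℤ => (∑ i, ((z i : ℝ)) ^ 2) * a z) {c : ℝ} (hc0 : 0 < c)
    (hc : ∀ θ ∈ Set.Icc (fun _ : Fin d => -π) (fun _ : Fin d => π),
      phiSymb d a θ ≤ -(c * ∑ i, θ i ^ 2)) (x : Fin d → ℤ) :
    Tendsto (fun t => √t ^ d * ptrans d a t x x) atTop
      (𝓝 (((2 * π) ^ d)⁻¹ * ∫ u : Fin d → ℝ,
        Real.exp (-(∑' z : Fin d → ℤ, a z * (∑ i, (z i : ℝ) * u i) ^ 2) / 2))) := by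
  have hφ := continuous_phiSymb hsum.summable
  have hlim : Tendsto (fun t : ℝ => ∫ u : Fin d → ℝ,
      (Set.Icc (fun _ : Fin d => -π) (fun _ : Fin d => π)).indicator
        (fun θ => Real.exp (phiSymb d a θ * t)) ((√t)⁻¹ • u)) atTop
      (𝓝 (∫ u : Fin d → ℝ,
        Real.exp (-(∑' z : Fin d → ℤ, a z * (∑ i, (z i : ℝ) * u i) ^ 2) / 2))) := by
    refine tendsto_integral_filter_of_dominated_convergence _ (.of_forall fun t => ?_) ?_
      (integrable_exp_neg_mul_sum_sq hc0) (.of_forall fun u => ?_)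
    · have hm : Measurable fun θ => Real.exp (phiSymb d a θ * t) :=
        Continuous.measurable (by fun_prop)
      exact ((hm.indicator measurableSet_Icc).comp (measurable_const_smul _)).aestronglyMeasurable
    · filter_upwards [eventually_gt_atTop 0] with t ht
      exact .of_forall (indicator_exp_phiSymb_le hc ht)
    · refine ((Real.continuous_exp.tendsto _).comp (tendsto_mul_phiSymb hsum hvar u)).congr' ?_
      filter_upwards [eventually_inv_sqrt_smul_mem u] with t ht
      rw [Set.indicator_of_mem ht, Function.comp_apply]
  refine (hlim.const_mul _).congr' ?_
  filter_upwards [eventually_gt_atTop 0] with t ht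
  rw [sqrt_pow_mul_ptrans_self ht]

lemma mul_sum_sq_le_tsum (hsum : HasSum a 0)
    (hvar : Summable fun z : Fin d → ℤ => (∑ i, ((z i : ℝ)) ^ 2) * a z) {c : ℝ}
    (hc : ∀ θ ∈ Set.Icc (fun _ : Fin d => -π) (fun _ : Fin d => π),
      phiSymb d a θ ≤ -(c * ∑ i, θ i ^ 2)) (u : Fin d → ℝ) :
    2 * c * ∑ i, u i ^ 2 ≤ ∑' z : Fin d → ℤ, a z * (∑ i, (z i : ℝ) * u i) ^ 2 := by
  have h := le_of_tendsto (b := -(c * ∑ i, u i ^ 2)) (tendsto_mul_phiSymb hsum hvar u) (by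
    filter_upwards [eventually_inv_sqrt_smul_mem u, eventually_gt_atTop 0] with t hmem ht
    have := indicator_exp_phiSymb_le hc ht u
    rwa [Set.indicator_of_mem hmem, Real.norm_of_nonneg (Real.exp_pos _).le,
      Real.exp_le_exp] at this)
  linarith

lemma summable_mul_coord_mul_coord
    (hvar : Summable fun z : Fin d → ℤ => (∑ i, ((z i : ℝ)) ^ 2) * a z) (i j : Fin d) :
    Summable fun z : Fin d → ℤ => a z * (z i : ℝ) * (z j : ℝ) := by
  refine hvar.abs.of_norm_bounded fun z => ?_
  have hle : ∀ k : Fin d, (z k : ℝ) ^ 2 ≤ ∑ i, (z i : ℝ) ^ 2 := fun k =>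
    Finset.single_le_sum (f := fun i => (z i : ℝ) ^ 2) (fun i _ => sq_nonneg _) (Finset.mem_univ k)
  have hij : |(z i : ℝ)| * |(z j : ℝ)| ≤ ∑ i, (z i : ℝ) ^ 2 := by
    nlinarith [hle i, hle j, sq_nonneg (|(z i : ℝ)| - |(z j : ℝ)|), sq_abs (z i : ℝ),
      sq_abs (z j : ℝ)]
  rw [norm_mul, norm_mul, mul_assoc, mul_comm, abs_mul,
    abs_of_nonneg (Finset.sum_nonneg fun i _ => sq_nonneg (z i : ℝ))]
  exact mul_le_mul_of_nonneg_right hij (abs_nonneg _)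

end

lemma tsum_mul_sq_eq_hessPhi {a : (Fin 2 → ℤ) → ℝ}
    (hvar : Summable fun z : Fin 2 → ℤ => (∑ i, ((z i : ℝ)) ^ 2) * a z) (u : Fin 2 → ℝ) :
    ∑' z : Fin 2 → ℤ, a z * (∑ i, (z i : ℝ) * u i) ^ 2 =
      -hessPhi 2 a 0 0 * u 0 ^ 2 + 2 * -hessPhi 2 a 0 1 * u 0 * u 1 +
        -hessPhi 2 a 1 1 * u 1 ^ 2 := by
  have h := fun i j => (summable_mul_coord_mul_coord hvar i j).hasSum
  have := (((h 0 0).mul_right (u 0 ^ 2)).add ((h 0 1).mul_right (2 * u 0 * u 1))).add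
    ((h 1 1).mul_right (u 1 ^ 2))
  simp only [hessPhi, Matrix.of_apply, neg_neg]
  rw [mul_assoc, mul_assoc, mul_left_comm, ← mul_assoc 2, ← this.tsum_eq]
  congr 1 with z
  rw [Fin.sum_univ_two]
  ring

lemma det_hessPhi_two (a : (Fin 2 → ℤ) → ℝ) : (hessPhi 2 a).det =
    -hessPhi 2 a 0 0 * -hessPhi 2 a 1 1 - (-hessPhi 2 a 0 1) ^ 2 := by
  have : hessPhi 2 a 1 0 = hessPhi 2 a 0 1 := by
    simp only [hessPhi, Matrix.of_apply, mul_right_comm]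
  rw [Matrix.det_fin_two, this]
  ring

/-- For `d = 2`: `G_λ(0,0) ~ γ₂ ln(1/λ)` as `λ → 0+`. -/
theorem Glam_asymptotic_d2
    (a : (Fin 2 → ℤ) → ℝ)
    (hpos : ∀ z : Fin 2 → ℤ, z ≠ 0 → 0 ≤ a z)
    (hneg : a 0 < 0)
    (hsymm : ∀ z : Fin 2 → ℤ, a (-z) = a z)
    (hsum : HasSum a 0)
    (hvar : Summable fun z : Fin 2 → ℤ => (∑ i, ((z i : ℝ)) ^ 2) * a z)
    (hirr : AddSubgroup.closure {z : Fin 2 → ℤ | 0 < a z} = ⊤)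
    : Tendsto (fun lam : ℝ => Glam 2 a lam 0 0 / Real.log (1 / lam)) (𝓝[>] (0 : ℝ))
      (𝓝 (gammaConst 2 a)) := by
  obtain ⟨c, hc0, hc⟩ := exists_phiSymb_le hpos hsum hirr
  have hq : ∀ x y : ℝ, 2 * c * (x ^ 2 + y ^ 2) ≤
      -hessPhi 2 a 0 0 * x ^ 2 + 2 * -hessPhi 2 a 0 1 * x * y + -hessPhi 2 a 1 1 * y ^ 2 :=
    fun x y => by
      have h := mul_sum_sq_le_tsum hsum hvar hc ![x, y]
      rwa [tsum_mul_sq_eq_hessPhi hvar, Fin.sum_univ_two] at h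
  have hdet : 0 < (hessPhi 2 a).det :=
    det_hessPhi_two a ▸ (pos_and_det_pos_of_quadratic (by positivity) hq).2
  have hγ : ((2 * π) ^ 2)⁻¹ * ∫ u : Fin 2 → ℝ,
      Real.exp (-(∑' z : Fin 2 → ℤ, a z * (∑ i, (z i : ℝ) * u i) ^ 2) / 2) =
        gammaConst 2 a := by
    simp only [tsum_mul_sq_eq_hessPhi hvar]
    rw [integral_exp_neg_quadratic (by positivity) hq, ← det_hessPhi_two, gammaConst,
      abs_of_pos hdet]
    simp
    field_simp
  rw [← hγ]
  have hsq : ∀ t : ℝ, 0 < t → √t ^ 2 * ptrans 2 a t 0 0 = t * ptrans 2 a t 0 0 := fun t ht => by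
    rw [Real.sq_sqrt ht.le]
  have hbound := fun (t : ℝ) (ht : 0 < t) =>
    hsq t ht ▸ abs_sqrt_pow_mul_ptrans_self_le hc0 hc 0 ht
  refine tendsto_laplace_div_log (continuous_ptrans_self hsum.summable 0)
    (fun t ht => (abs_ptrans_self_le hpos hsum 0 ht.le).trans (le_max_left _ _))
    (fun t ht => (hbound t ht).trans (le_max_right _ _))
    ((tendsto_sqrt_pow_mul_ptrans_self hsum hvar hc0 hc 0).congr' ?_)
  filter_upwards [eventually_gt_atTop 0] with t ht using hsq t ht
end

section
/- If d ≥ 3, then for every r ∈ ℤ^d one has ∫_t^∞ p(u; 0, r) du ~ 2γ_d/((d-2) t^{d/2-1}) as t → ∞; that is, lim_{t→∞} t^{d/2-1} ∫_t^∞ p(u; 0, r) du = 2γ_d/(d-2). -/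
open MeasureTheory Real Filter Topology Asymptotics

theorem tendsto_rpow_mul_integral_Ioi {f : ℝ → ℝ} {s c : ℝ} (hs : 1 < s)
    (hf : AEStronglyMeasurable f) (h : Tendsto (fun u => u ^ s * f u) atTop (𝓝 c)) :
    Tendsto (fun t => t ^ (s - 1) * ∫ u in Set.Ioi t, f u) atTop (𝓝 (c / (s - 1))) := by
  have hlim : Tendsto (fun t => ∫ x in Set.Ioi (1 : ℝ), x ^ (-s) * ((t * x) ^ s * f (t * x)))
      atTop (𝓝 (∫ x in Set.Ioi (1 : ℝ), x ^ (-s) * c)) := by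
    obtain ⟨T, hT⟩ := eventually_atTop.1
      ((h.abs.eventually (gt_mem_nhds (lt_add_one |c|))).and (eventually_gt_atTop 0))
    refine tendsto_integral_filter_of_dominated_convergence (fun x => x ^ (-s) * (|c| + 1))
      ?_ ?_ ?_ ?_
    · filter_upwards [eventually_gt_atTop 0] with t ht
      have hq : Measure.QuasiMeasurePreserving (fun x : ℝ => t * x) volume volume :=
        ⟨by fun_prop, by
          rw [Real.map_volume_mul_left ht.ne']
          exact Measure.smul_absolutelyContinuous⟩
      have := (hf.comp_quasiMeasurePreserving hq).restrict (s := Set.Ioi (1 : ℝ))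
      refine AEStronglyMeasurable.mul ?_ (AEStronglyMeasurable.mul ?_ this)
      · exact (Measurable.pow_const measurable_id _).aestronglyMeasurable
      · exact (Measurable.pow_const (by fun_prop) _).aestronglyMeasurable
    · filter_upwards [eventually_ge_atTop T, eventually_gt_atTop 0] with t ht ht0
      filter_upwards [self_mem_ae_restrict measurableSet_Ioi] with x (hx : 1 < x)
      have hx0 : 0 < x := by linarith
      have := (hT (t * x) (by nlinarith)).1
      rw [norm_mul, Real.norm_of_nonneg (by positivity), Real.norm_eq_abs]
      gcongr
    · exact (integrableOn_Ioi_rpow_of_lt (by linarith) one_pos).mul_const _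
    · filter_upwards [self_mem_ae_restrict measurableSet_Ioi] with x (hx : 1 < x)
      exact (h.comp (tendsto_id.atTop_mul_const (by linarith))).const_mul _
  have hval : ∫ x in Set.Ioi (1 : ℝ), x ^ (-s) * c = c / (s - 1) := by
    rw [integral_mul_const, integral_Ioi_rpow_of_lt (by linarith) one_pos, Real.one_rpow]
    have : s - 1 ≠ 0 := by linarith
    have : -s + 1 ≠ 0 := by linarith
    field_simp
    ring
  rw [hval] at hlim
  refine hlim.congr' ?_
  filter_upwards [eventually_gt_atTop 0] with t ht
  have := integral_comp_mul_left_Ioi' f 1 ht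
  rw [mul_one] at this
  rw [← this, smul_eq_mul, ← mul_assoc, ← Real.rpow_add_one ht.ne', sub_add_cancel,
    ← integral_const_mul]
  refine setIntegral_congr_fun measurableSet_Ioi fun x (hx : 1 < x) => ?_
  have hx0 : 0 < x := by linarith
  rw [Real.mul_rpow ht.le hx0.le, Real.rpow_neg hx0.le]
  field_simp

open scoped MatrixOrder in
theorem Matrix.PosDef.integral_exp_neg_half {ι : Type*} [Fintype ι] [DecidableEq ι]
    {M : Matrix ι ι ℝ} (hM : M.PosDef) :
    ∫ v : ι → ℝ, Real.exp (-(v ⬝ᵥ M.mulVec v) / 2) =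
      (2 * π) ^ ((Fintype.card ι : ℝ) / 2) * (Real.sqrt M.det)⁻¹ := by
  obtain ⟨B, rfl⟩ := CStarAlgebra.nonneg_iff_eq_star_mul_self.mp hM.posSemidef.nonneg
  rw [Matrix.star_eq_conjTranspose, Matrix.conjTranspose_eq_transpose_of_trivial] at *
  have hdet : (B.transpose * B).det = B.det ^ 2 := by
    rw [Matrix.det_mul, Matrix.det_transpose, sq]
  have hB : B.det ≠ 0 := fun h => hM.det_pos.ne' (by rw [hdet, h]; simp)
  have hform (v : ι → ℝ) : v ⬝ᵥ (B.transpose * B).mulVec v = ∑ i, (B.mulVec v i) ^ 2 := by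
    rw [← Matrix.mulVec_mulVec, Matrix.dotProduct_mulVec, Matrix.vecMul_transpose]
    simp [dotProduct, sq]
  have hmap := Real.map_matrix_volume_pi_eq_smul_volume_pi hB
  have hcov : ∫ v : ι → ℝ, Real.exp (-(∑ i, (B.mulVec v i) ^ 2) / 2) =
      |B.det|⁻¹ * ∫ w : ι → ℝ, Real.exp (-(∑ i, w i ^ 2) / 2) := by
    have := integral_map (μ := volume) (φ := Matrix.toLin' B)
      (f := fun w : ι → ℝ => Real.exp (-(∑ i, w i ^ 2) / 2))
      (LinearMap.continuous_of_finiteDimensional _).aemeasurable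
      (Continuous.aestronglyMeasurable (by fun_prop))
    simp only [Matrix.toLin'_apply] at this
    rw [← this, hmap, integral_smul_measure, ENNReal.toReal_ofReal (abs_nonneg _), abs_inv,
      smul_eq_mul]
  have hprod : ∫ w : ι → ℝ, Real.exp (-(∑ i, w i ^ 2) / 2) =
      (2 * π) ^ ((Fintype.card ι : ℝ) / 2) := by
    have := integral_fintype_prod_volume_eq_pow (ι := ι)
      (fun x : ℝ => Real.exp (-(1 / 2) * x ^ 2))
    simp only [← Real.exp_sum, ← Finset.mul_sum, integral_gaussian] at this
    have hr : √(π / (1 / 2)) ^ Fintype.card ι = (2 * π) ^ ((Fintype.card ι : ℝ) / 2) := by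
      rw [Real.sqrt_eq_rpow, ← Real.rpow_natCast, ← Real.rpow_mul (by positivity)]
      congr 1 <;> ring
    rw [← hr, ← this]
    congr 1 with w
    ring_nf
  simp only [hform, hcov, hprod, hdet, Real.sqrt_sq_eq_abs]
  ring

/-- The assumptions on the rates of the walk that its heat kernel asymptotics depend on. -/
structure IsWalkRate (d : ℕ) (a : (Fin d → ℤ) → ℝ) : Prop where
  nonneg : ∀ z : Fin d → ℤ, z ≠ 0 → 0 ≤ a z
  hasSum : HasSum a 0
  summable_sq : Summable fun z : Fin d → ℤ => (∑ i, ((z i : ℝ)) ^ 2) * a z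
  closure_eq_top : AddSubgroup.closure {z : Fin d → ℤ | 0 < a z} = ⊤

theorem Fin.sum_sq_le_norm_sq {d : ℕ} (θ : Fin d → ℝ) : ∑ i, θ i ^ 2 ≤ d * ‖θ‖ ^ 2 := by
  calc ∑ i, θ i ^ 2 ≤ ∑ _i : Fin d, ‖θ‖ ^ 2 := by
        refine Finset.sum_le_sum fun i _ => ?_
        rw [← sq_abs]
        have := norm_le_pi_norm θ i
        rw [Real.norm_eq_abs] at this
        gcongr
    _ = d * ‖θ‖ ^ 2 := by simp

theorem Real.abs_cos_taylor_le (x : ℝ) : |Real.cos x - 1 + x ^ 2 / 2| ≤ x ^ 2 / 2 := by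
  rw [abs_of_nonneg (by linarith [Real.one_sub_sq_div_two_le_cos (x := x)])]
  linarith [Real.cos_le_one x]

theorem Fin.sq_sum_mul_le {d : ℕ} (z : Fin d → ℤ) (θ : Fin d → ℝ) :
    (∑ i, (z i : ℝ) * θ i) ^ 2 ≤ (∑ i, (z i : ℝ) ^ 2) * (d * ‖θ‖ ^ 2) :=
  (Finset.sum_mul_sq_le_sq_mul_sq _ _ _).trans (by gcongr; exact Fin.sum_sq_le_norm_sq θ)

namespace IsWalkRate

variable {d : ℕ} {a : (Fin d → ℤ) → ℝ}

theorem mul_nonneg (h : IsWalkRate d a) {f : (Fin d → ℤ) → ℝ} (hf : ∀ z, 0 ≤ f z)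
    (hf0 : f 0 = 0) (z : Fin d → ℤ) : 0 ≤ a z * f z := by
  rcases eq_or_ne z 0 with rfl | hz
  · simp [hf0]
  · exact _root_.mul_nonneg (h.nonneg z hz) (hf z)

theorem summable_mul (h : IsWalkRate d a) {f : (Fin d → ℤ) → ℝ} {C : ℝ}
    (hf : ∀ z, |f z| ≤ C * ∑ i, (z i : ℝ) ^ 2) : Summable fun z => a z * f z := by
  refine Summable.of_norm_bounded ((h.summable_sq.abs).mul_left C) fun z => ?_
  rw [norm_mul, Real.norm_eq_abs, Real.norm_eq_abs, abs_mul,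
    abs_of_nonneg (a := ∑ i, (z i : ℝ) ^ 2) (by positivity)]
  nlinarith [hf z, abs_nonneg (a z)]

theorem summable_mul_sq (h : IsWalkRate d a) (θ : Fin d → ℝ) :
    Summable fun z => a z * (∑ i, (z i : ℝ) * θ i) ^ 2 :=
  h.summable_mul (C := d * ‖θ‖ ^ 2) fun z => by
    rw [abs_of_nonneg (sq_nonneg _), mul_comm]
    exact Fin.sq_sum_mul_le z θ

theorem summable_mul_cos (h : IsWalkRate d a) (θ : Fin d → ℝ) :
    Summable fun z => a z * Real.cos (∑ i, (z i : ℝ) * θ i) :=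
  Summable.of_norm_bounded h.hasSum.summable.abs fun z => by
    rw [norm_mul, Real.norm_eq_abs]
    exact mul_le_of_le_one_right (abs_nonneg _) (Real.abs_cos_le_one _)

theorem hasSum_neg_phiSymb (h : IsWalkRate d a) (θ : Fin d → ℝ) :
    HasSum (fun z => a z * (1 - Real.cos (∑ i, (z i : ℝ) * θ i))) (-phiSymb d a θ) := by
  have := h.hasSum.sub (h.summable_mul_cos θ).hasSum
  simpa only [mul_sub, mul_one, zero_sub, phiSymb] using this

theorem continuous_phiSymb (h : IsWalkRate d a) : Continuous (phiSymb d a) := by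
  refine continuous_tsum (fun z => by fun_prop) h.hasSum.summable.abs fun z θ => ?_
  rw [norm_mul, Real.norm_eq_abs]
  exact mul_le_of_le_one_right (abs_nonneg _) (Real.abs_cos_le_one _)

theorem tsum_mul_sq_eq (h : IsWalkRate d a) (θ : Fin d → ℝ) :
    ∑' z, a z * (∑ i, (z i : ℝ) * θ i) ^ 2 = θ ⬝ᵥ (-hessPhi d a).mulVec θ := by
  have hs (i j : Fin d) : Summable fun z : Fin d → ℤ => a z * (z i : ℝ) * (z j : ℝ) := by
    simp only [mul_assoc]
    refine h.summable_mul (C := 1) fun z => ?_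
    have hi := Finset.single_le_sum (f := fun i => (z i : ℝ) ^ 2) (fun _ _ => sq_nonneg _)
      (Finset.mem_univ i)
    have hj := Finset.single_le_sum (f := fun i => (z i : ℝ) ^ 2) (fun _ _ => sq_nonneg _)
      (Finset.mem_univ j)
    rw [abs_le]
    constructor <;> nlinarith [sq_nonneg ((z i : ℝ) - z j), sq_nonneg ((z i : ℝ) + z j)]
  have hsum : HasSum (fun z => ∑ i, ∑ j, θ i * ((a z * (z i : ℝ) * (z j : ℝ)) * θ j))
      (∑ i, ∑ j, θ i * ((∑' z, a z * (z i : ℝ) * (z j : ℝ)) * θ j)) :=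
    hasSum_sum fun i _ => hasSum_sum fun j _ => ((hs i j).hasSum.mul_right _).mul_left _
  have hL : (fun z => a z * (∑ i, (z i : ℝ) * θ i) ^ 2) =
      fun z => ∑ i, ∑ j, θ i * ((a z * (z i : ℝ) * (z j : ℝ)) * θ j) := by
    ext z
    rw [sq, Finset.sum_mul_sum, Finset.mul_sum]
    refine Finset.sum_congr rfl fun i _ => ?_
    rw [Finset.mul_sum]
    exact Finset.sum_congr rfl fun j _ => by ring
  rw [hL, hsum.tsum_eq]
  simp [dotProduct, Matrix.mulVec, hessPhi, Finset.mul_sum]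

theorem eq_zero_of_tsum_eq_zero (h : IsWalkRate d a) {f : (Fin d → ℤ) → ℝ} (hf : ∀ z, 0 ≤ f z)
    (hf0 : f 0 = 0) (hs : HasSum (fun z => a z * f z) 0) {z : Fin d → ℤ} (hz : 0 < a z) :
    f z = 0 := by
  have := congrFun ((hasSum_zero_iff_of_nonneg (h.mul_nonneg hf hf0)).1 hs) z
  exact (mul_eq_zero.1 this).resolve_left hz.ne'

theorem sum_mul_mem (h : IsWalkRate d a) (S : AddSubgroup ℝ) {θ : Fin d → ℝ}
    (hS : ∀ z, 0 < a z → ∑ i, (z i : ℝ) * θ i ∈ S) (i : Fin d) : θ i ∈ S := by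
  have hall (z : Fin d → ℤ) : ∑ i, (z i : ℝ) * θ i ∈ S := by
    have hz : z ∈ AddSubgroup.closure {z : Fin d → ℤ | 0 < a z} := by
      rw [h.closure_eq_top]; trivial
    induction hz using AddSubgroup.closure_induction with
    | mem z hz => exact hS z hz
    | zero => simp
    | add x y _ _ hx hy => simpa [add_mul, Finset.sum_add_distrib] using S.add_mem hx hy
    | neg x _ hx => simpa using S.neg_mem hx
  simpa [Pi.single_apply] using hall (Pi.single i 1)

theorem posDef_neg_hessPhi (h : IsWalkRate d a) : (-hessPhi d a).PosDef := by
  refine Matrix.PosDef.of_dotProduct_mulVec_pos ?_ fun {v} hv => ?_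
  · ext i j
    simp only [Matrix.conjTranspose_apply, Matrix.neg_apply, hessPhi, Matrix.of_apply, neg_neg,
      star_trivial]
    exact tsum_congr fun z => by ring
  · rw [star_trivial, ← h.tsum_mul_sq_eq]
    have h0 := h.mul_nonneg (f := fun z => (∑ i, (z i : ℝ) * v i) ^ 2) (fun z => sq_nonneg _)
      (by simp)
    refine (tsum_nonneg h0).lt_of_ne fun heq => hv ?_
    ext i
    refine AddSubgroup.mem_bot.1 (h.sum_mul_mem ⊥ (fun z hz => ?_) i)
    have := (h.summable_mul_sq v).hasSum
    rw [← heq] at this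
    exact AddSubgroup.mem_bot.2 (pow_eq_zero_iff two_ne_zero |>.1
      (h.eq_zero_of_tsum_eq_zero (f := fun z => (∑ i, (z i : ℝ) * v i) ^ 2)
        (fun z => sq_nonneg _) (by simp) this hz))

theorem phiSymb_neg (h : IsWalkRate d a) {θ : Fin d → ℝ}
    (hθ : θ ∈ Set.Icc (fun _ : Fin d => -π) (fun _ : Fin d => π)) (hne : θ ≠ 0) :
    phiSymb d a θ < 0 := by
  have hc (z : Fin d → ℤ) : 0 ≤ 1 - Real.cos (∑ i, (z i : ℝ) * θ i) :=
    sub_nonneg.2 (Real.cos_le_one _)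
  have hs := h.hasSum_neg_phiSymb θ
  have h0 := hs.nonneg (h.mul_nonneg hc (by simp))
  refine lt_of_le_of_ne (by linarith) fun heq => hne ?_
  ext i
  rw [heq, neg_zero] at hs
  obtain ⟨n, hn⟩ := AddSubgroup.mem_zmultiples_iff.1
    (h.sum_mul_mem (AddSubgroup.zmultiples (2 * π)) (fun z hz => by
      obtain ⟨n, hn⟩ := (Real.cos_eq_one_iff _).1
        (sub_eq_zero.1 (h.eq_zero_of_tsum_eq_zero hc (by simp) hs hz)).symm
      exact AddSubgroup.mem_zmultiples_iff.2 ⟨n, by simpa using hn⟩) i)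
  rw [zsmul_eq_mul] at hn
  have h1 := hθ.1 i
  have h2 := hθ.2 i
  have hπ := Real.pi_pos
  simp only [← hn] at h1 h2
  have hn1 : (n : ℝ) < 1 := by nlinarith
  have hn2 : (-1 : ℝ) < n := by nlinarith
  have : n = 0 := by
    have : n < 1 := by exact_mod_cast hn1
    have : -1 < n := by exact_mod_cast hn2
    omega
  simp [← hn, this]

theorem exists_phiSymb_taylor (h : IsWalkRate d a) :
    ∃ ρ : (Fin d → ℝ) → ℝ, Tendsto ρ (𝓝 0) (𝓝 0) ∧
      ∀ θ, phiSymb d a θ = -(θ ⬝ᵥ (-hessPhi d a).mulVec θ) / 2 + ‖θ‖ ^ 2 * ρ θ := by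
  let g (x : ℝ) : ℝ := Real.cos x - 1 + x ^ 2 / 2
  refine ⟨fun θ => ∑' z, a z * g (∑ i, (z i : ℝ) * θ i) / ‖θ‖ ^ 2, ?_, fun θ => ?_⟩
  · rw [← tsum_zero (α := ℝ) (β := Fin d → ℤ)]
    refine tendsto_tsum_of_dominated_convergence (h.summable_sq.abs.mul_left (d : ℝ))
      (fun z => ?_) (Eventually.of_forall fun θ z => ?_)
    · have hcont : Continuous fun θ : Fin d → ℝ => ∑ i, (z i : ℝ) * θ i := by fun_prop
      have hsmall : ∀ᶠ θ : Fin d → ℝ in 𝓝 0, |∑ i, (z i : ℝ) * θ i| < 1 := by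
        refine (hcont.abs.tendsto 0).eventually (gt_mem_nhds ?_)
        simp
      have hlim : Tendsto (fun θ : Fin d → ℝ =>
          |a z| * ((∑ i, (z i : ℝ) ^ 2) * d) ^ 2 * ‖θ‖ ^ 2) (𝓝 0) (𝓝 0) := by
        have : Continuous fun θ : Fin d → ℝ =>
          |a z| * ((∑ i, (z i : ℝ) ^ 2) * d) ^ 2 * ‖θ‖ ^ 2 := by fun_prop
        simpa using this.tendsto 0
      refine squeeze_zero_norm' ?_ hlim
      filter_upwards [hsmall] with θ hθ
      rcases eq_or_ne θ 0 with rfl | hne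
      · simp
      have hn : 0 < ‖θ‖ := norm_pos_iff.2 hne
      have hg : |g (∑ i, (z i : ℝ) * θ i)| ≤ ((∑ i, (z i : ℝ) * θ i) ^ 2) ^ 2 := by
        have := Real.cos_bound hθ.le
        rw [show Real.cos (∑ i, (z i : ℝ) * θ i) - (1 - (∑ i, (z i : ℝ) * θ i) ^ 2 / 2) =
          g (∑ i, (z i : ℝ) * θ i) by simp only [g]; ring] at this
        refine this.trans ?_
        rw [← pow_mul, show 2 * 2 = 4 from rfl, ← Even.pow_abs (n := 4) (by decide) (∑ i, (z i : ℝ) * θ i)]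
        nlinarith [pow_nonneg (abs_nonneg (∑ i, (z i : ℝ) * θ i)) 4]
      have hL := pow_le_pow_left₀ (sq_nonneg _) (Fin.sq_sum_mul_le z θ) 2
      rw [norm_div, norm_mul, Real.norm_eq_abs, Real.norm_eq_abs, norm_pow, norm_norm,
        div_le_iff₀ (by positivity)]
      calc |a z| * |g (∑ i, (z i : ℝ) * θ i)|
          ≤ |a z| * ((∑ i, (z i : ℝ) ^ 2) * (d * ‖θ‖ ^ 2)) ^ 2 := by
            gcongr
            exact hg.trans hL
        _ = _ := by ring
    · have hg := Real.abs_cos_taylor_le (∑ i, (z i : ℝ) * θ i)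
      have hL := Fin.sq_sum_mul_le z θ
      rw [norm_div, norm_mul, Real.norm_eq_abs, Real.norm_eq_abs, norm_pow, norm_norm, abs_mul,
        abs_of_nonneg (a := ∑ i, (z i : ℝ) ^ 2) (by positivity)]
      refine div_le_of_le_mul₀ (by positivity) (by positivity) ?_
      calc |a z| * |g (∑ i, (z i : ℝ) * θ i)|
          ≤ |a z| * ((∑ i, (z i : ℝ) ^ 2) * (d * ‖θ‖ ^ 2)) := by
            gcongr
            linarith [sq_nonneg (∑ i, (z i : ℝ) * θ i)]
        _ = _ := by ring
  · have hsum := ((h.hasSum_neg_phiSymb θ).neg.add ((h.summable_mul_sq θ).hasSum.div_const 2))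
    rw [neg_neg, h.tsum_mul_sq_eq] at hsum
    have hg : (fun z => a z * g (∑ i, (z i : ℝ) * θ i)) = fun z =>
        -(a z * (1 - Real.cos (∑ i, (z i : ℝ) * θ i))) + a z * (∑ i, (z i : ℝ) * θ i) ^ 2 / 2 := by
      ext z
      simp only [g]
      ring
    rw [← hg] at hsum
    rcases eq_or_ne θ 0 with rfl | hne
    · simpa [phiSymb] using h.hasSum.tsum_eq
    beta_reduce
    rw [tsum_div_const, hsum.tsum_eq]
    have : ‖θ‖ ≠ 0 := norm_ne_zero_iff.2 hne
    field_simp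
    ring

theorem exists_le_dotProduct_hessPhi (h : IsWalkRate d a) :
    ∃ c > 0, ∀ θ : Fin d → ℝ, c * ‖θ‖ ^ 2 ≤ θ ⬝ᵥ (-hessPhi d a).mulVec θ := by
  have hcont : Continuous fun θ : Fin d → ℝ => θ ⬝ᵥ (-hessPhi d a).mulVec θ := by
    simp only [dotProduct, Matrix.mulVec]
    fun_prop
  obtain ⟨c, hc, hle⟩ := (isCompact_sphere (0 : Fin d → ℝ) 1).exists_forall_le'
    hcont.continuousOn (a := 0) fun v hv => by
      have := h.posDef_neg_hessPhi.dotProduct_mulVec_pos (x := v)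
        (norm_ne_zero_iff.1 (by rw [mem_sphere_zero_iff_norm.1 hv]; exact one_ne_zero))
      rwa [star_trivial] at this
  refine ⟨c, hc, fun θ => ?_⟩
  rcases eq_or_ne θ 0 with rfl | hne
  · simp
  have hn : ‖θ‖ ≠ 0 := norm_ne_zero_iff.2 hne
  have := hle (‖θ‖⁻¹ • θ) (by simp [norm_smul, hn])
  rw [Matrix.mulVec_smul, smul_dotProduct, dotProduct_smul, smul_eq_mul, smul_eq_mul] at this
  calc c * ‖θ‖ ^ 2 ≤ ‖θ‖⁻¹ * (‖θ‖⁻¹ * (θ ⬝ᵥ (-hessPhi d a).mulVec θ)) * ‖θ‖ ^ 2 := by gcongr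
    _ = _ := by field_simp

theorem exists_le_neg_phiSymb (h : IsWalkRate d a) :
    ∃ c > 0, ∀ θ ∈ Set.Icc (fun _ : Fin d => -π) (fun _ : Fin d => π),
      c * ∑ i, θ i ^ 2 ≤ -phiSymb d a θ := by
  suffices H : ∃ c > 0, ∀ θ ∈ Set.Icc (fun _ : Fin d => -π) (fun _ : Fin d => π),
      c * ‖θ‖ ^ 2 ≤ -phiSymb d a θ by
    obtain ⟨c, hc, hle⟩ := H
    refine ⟨c / (d + 1), by positivity, fun θ hθ => le_trans ?_ (hle θ hθ)⟩
    rw [div_mul_eq_mul_div, div_le_iff₀ (by positivity)]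
    have h1 := mul_le_mul_of_nonneg_left (Fin.sum_sq_le_norm_sq θ) hc.le
    have h2 : 0 ≤ c * ‖θ‖ ^ 2 := by positivity
    linarith
  obtain ⟨ρ, hρ, hφ⟩ := h.exists_phiSymb_taylor
  obtain ⟨c, hc, hQ⟩ := h.exists_le_dotProduct_hessPhi
  obtain ⟨δ, hδ, hball⟩ := Metric.eventually_nhds_iff_ball.1
    (hρ.eventually (gt_mem_nhds (show (0 : ℝ) < c / 4 by positivity)))
  obtain ⟨m, hm, hout⟩ := ((isCompact_Icc (a := fun _ : Fin d => -π)
    (b := fun _ : Fin d => π)).diff (Metric.isOpen_ball (x := 0) (ε := δ))).exists_forall_le'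
      (f := fun θ => -phiSymb d a θ) h.continuous_phiSymb.neg.continuousOn (a := 0)
      fun θ hθ => neg_pos.2 (h.phiSymb_neg hθ.1 (by
        rintro rfl
        exact hθ.2 (Metric.mem_ball_self hδ)))
  refine ⟨min (c / 4) (m / π ^ 2), by positivity, fun θ hθ => ?_⟩
  by_cases hθδ : θ ∈ Metric.ball (0 : Fin d → ℝ) δ
  · calc min (c / 4) (m / π ^ 2) * ‖θ‖ ^ 2 ≤ c / 4 * ‖θ‖ ^ 2 := by gcongr; exact min_le_left _ _
      _ ≤ -phiSymb d a θ := by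
        rw [hφ]
        have h1 := mul_le_mul_of_nonneg_left (hball θ hθδ).le (sq_nonneg ‖θ‖)
        linarith [hQ θ]
  · have hn : ‖θ‖ ≤ π := (pi_norm_le_iff_of_nonneg Real.pi_pos.le).2 fun i =>
      abs_le.2 ⟨hθ.1 i, hθ.2 i⟩
    calc min (c / 4) (m / π ^ 2) * ‖θ‖ ^ 2 ≤ m / π ^ 2 * π ^ 2 := by
          gcongr
          exact min_le_right _ _
      _ = m := by field_simp
      _ ≤ -phiSymb d a θ := hout θ ⟨hθ, hθδ⟩

theorem tendsto_mul_phiSymb (h : IsWalkRate d a) (v : Fin d → ℝ) :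
    Tendsto (fun t : ℝ => phiSymb d a ((√t)⁻¹ • v) * t) atTop
      (𝓝 (-(v ⬝ᵥ (-hessPhi d a).mulVec v) / 2)) := by
  obtain ⟨ρ, hρ, hφ⟩ := h.exists_phiSymb_taylor
  have hv : Tendsto (fun t : ℝ => (√t)⁻¹ • v) atTop (𝓝 0) := by
    simpa using (Real.tendsto_sqrt_atTop.inv_tendsto_atTop).smul_const v
  have hlim := ((hρ.comp hv).const_mul (‖v‖ ^ 2)).const_add
    (-(v ⬝ᵥ (-hessPhi d a).mulVec v) / 2)
  rw [mul_zero, add_zero] at hlim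
  refine hlim.congr' ?_
  filter_upwards [eventually_gt_atTop 0] with t ht
  have hs : 0 < √t := Real.sqrt_pos.2 ht
  have ht2 : t = √t ^ 2 := (Real.sq_sqrt ht.le).symm
  rw [hφ, Matrix.mulVec_smul, smul_dotProduct, dotProduct_smul, norm_smul, norm_inv,
    Real.norm_of_nonneg hs.le, smul_eq_mul, smul_eq_mul, Function.comp_apply]
  set ρt := ρ ((√t)⁻¹ • v)
  conv_rhs => rw [ht2]
  rw [Real.sqrt_sq hs.le]
  field_simp

theorem tendsto_rpow_mul_ptrans (h : IsWalkRate d a) (r : Fin d → ℤ) :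
    Tendsto (fun t : ℝ => t ^ ((d : ℝ) / 2) * ptrans d a t 0 r) atTop (𝓝 (gammaConst d a)) := by
  set K := Set.Icc (fun _ : Fin d => -π) (fun _ : Fin d => π)
  have hKm : MeasurableSet K := isClosed_Icc.measurableSet
  have hK0 : K ∈ 𝓝 (0 : Fin d → ℝ) :=
    pi_Icc_mem_nhds (fun _ => by simpa using Real.pi_pos) fun _ => Real.pi_pos
  have hφc := h.continuous_phiSymb
  obtain ⟨c, hc, hle⟩ := h.exists_le_neg_phiSymb
  let F (t : ℝ) : (Fin d → ℝ) → ℝ :=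
    K.indicator fun θ => Real.exp (phiSymb d a θ * t) *
      Real.cos (∑ i, θ i * ((r i : ℝ) - ((0 : Fin d → ℤ) i : ℝ)))
  have hFm (t : ℝ) : Measurable (F t) :=
    (Continuous.measurable (by fun_prop)).indicator hKm
  have hlim : Tendsto (fun t : ℝ => ∫ v : Fin d → ℝ, F t ((√t)⁻¹ • v)) atTop
      (𝓝 (∫ v : Fin d → ℝ, Real.exp (-(v ⬝ᵥ (-hessPhi d a).mulVec v) / 2))) := by
    refine tendsto_integral_filter_of_dominated_convergence
      (fun v => ∏ i, Real.exp (-c * v i ^ 2)) ?_ ?_ ?_ ?_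
    · exact Eventually.of_forall fun t =>
        ((hFm t).comp (measurable_const_smul _)).aestronglyMeasurable
    · filter_upwards [eventually_gt_atTop 0] with t ht
      refine Eventually.of_forall fun v => ?_
      by_cases hv : (√t)⁻¹ • v ∈ K
      · simp only [F, Set.indicator_of_mem hv]
        rw [norm_mul, Real.norm_of_nonneg (Real.exp_nonneg _), ← Real.exp_sum, ← Finset.mul_sum]
        refine (mul_le_of_le_one_right (Real.exp_nonneg _) (Real.abs_cos_le_one _)).trans ?_
        refine Real.exp_le_exp.2 ?_
        have := mul_le_mul_of_nonneg_right (hle _ hv) ht.le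
        simp only [Pi.smul_apply, smul_eq_mul, mul_pow, inv_pow, Real.sq_sqrt ht.le,
          ← Finset.mul_sum] at this
        rw [mul_assoc, mul_right_comm, inv_mul_cancel₀ ht.ne', one_mul] at this
        linarith
      · simp only [F, Set.indicator_of_notMem hv, norm_zero]
        positivity
    · exact Integrable.fintype_prod fun _ => integrable_exp_neg_mul_sq hc
    · refine Eventually.of_forall fun v => ?_
      have hv : Tendsto (fun t : ℝ => (√t)⁻¹ • v) atTop (𝓝 0) := by
        simpa using (Real.tendsto_sqrt_atTop.inv_tendsto_atTop).smul_const v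
      have hcos : Continuous fun θ : Fin d → ℝ =>
          Real.cos (∑ i, θ i * ((r i : ℝ) - ((0 : Fin d → ℤ) i : ℝ))) := by fun_prop
      have := ((Real.continuous_exp.tendsto _).comp (h.tendsto_mul_phiSymb v)).mul
        ((hcos.tendsto 0).comp hv)
      simp only [Pi.zero_apply, zero_mul, Finset.sum_const_zero, Real.cos_zero, mul_one] at this
      refine this.congr' ?_
      filter_upwards [hv hK0] with t (ht : (√t)⁻¹ • v ∈ K)
      simp only [F, Set.indicator_of_mem ht, Function.comp_apply, Pi.zero_apply]
  rw [h.posDef_neg_hessPhi.integral_exp_neg_half] at hlim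
  have hconst : ((2 * π) ^ d)⁻¹ * ((2 * π) ^ ((Fintype.card (Fin d) : ℝ) / 2) *
      (√(-hessPhi d a).det)⁻¹) = gammaConst d a := by
    have hdet : (-hessPhi d a).det = |(hessPhi d a).det| := by
      rw [← abs_of_pos h.posDef_neg_hessPhi.det_pos, Matrix.det_neg, abs_mul, abs_pow, abs_neg,
        abs_one, one_pow, one_mul]
    have hpow : (2 * π) ^ d = (2 * π) ^ ((d : ℝ) / 2) * (2 * π) ^ ((d : ℝ) / 2) := by
      rw [← Real.rpow_add (by positivity), add_halves, Real.rpow_natCast]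
    have : (2 * π) ^ ((d : ℝ) / 2) ≠ 0 := by positivity
    rw [gammaConst, hdet, hpow, Fintype.card_fin]
    field_simp
  rw [← hconst]
  refine (hlim.const_mul ((2 * π) ^ d)⁻¹).congr' ?_
  filter_upwards [eventually_gt_atTop 0] with t ht
  have hpow : |(((√t)⁻¹ ^ d)⁻¹)| = t ^ ((d : ℝ) / 2) := by
    rw [inv_pow, inv_inv, abs_of_nonneg (by positivity), Real.sqrt_eq_rpow, ← Real.rpow_natCast,
      ← Real.rpow_mul ht.le]
    congr 1
    ring
  rw [Measure.integral_comp_smul, Module.finrank_fin_fun, hpow, integral_indicator hKm, ptrans,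
    smul_eq_mul]
  ring

theorem stronglyMeasurable_ptrans (h : IsWalkRate d a) (x y : Fin d → ℤ) :
    StronglyMeasurable fun t => ptrans d a t x y := by
  have hφ := h.continuous_phiSymb
  refine StronglyMeasurable.const_mul ?_ _
  refine StronglyMeasurable.integral_prod_right' (f := fun p : ℝ × (Fin d → ℝ) =>
    Real.exp (phiSymb d a p.2 * p.1) * Real.cos (∑ i, p.2 i * ((y i : ℝ) - (x i : ℝ)))) ?_
  exact Continuous.stronglyMeasurable (by fun_prop)

end IsWalkRate

/-- For `d ≥ 3`: `∫_t^∞ p(u;0,r) du ~ 2γ_d/((d-2) t^{d/2-1})` as `t → ∞`. -/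
theorem tail_integral_asymptotic
    (d : ℕ) (hd : 1 ≤ d) (a : (Fin d → ℤ) → ℝ)
    (hpos : ∀ z : Fin d → ℤ, z ≠ 0 → 0 ≤ a z)
    (hneg : a 0 < 0)
    (hsymm : ∀ z : Fin d → ℤ, a (-z) = a z)
    (hsum : HasSum a 0)
    (hvar : Summable fun z : Fin d → ℤ => (∑ i, ((z i : ℝ)) ^ 2) * a z)
    (hirr : AddSubgroup.closure {z : Fin d → ℤ | 0 < a z} = ⊤)
    (hd3 : 3 ≤ d) (r : Fin d → ℤ) :
    Tendsto (fun t : ℝ => t ^ ((d : ℝ) / 2 - 1) * ∫ u in Set.Ioi t, ptrans d a u 0 r) atTop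
      (𝓝 (2 * gammaConst d a / ((d : ℝ) - 2))) := by
  have h : IsWalkRate d a := ⟨hpos, hsum, hvar, hirr⟩
  have hd3' : (3 : ℝ) ≤ d := by exact_mod_cast hd3
  have := tendsto_rpow_mul_integral_Ioi (by linarith)
    (h.stronglyMeasurable_ptrans 0 r).aestronglyMeasurable (h.tendsto_rpow_mul_ptrans r)
  convert this using 2
  have : (d : ℝ) - 2 ≠ 0 := by linarith
  have : (d : ℝ) / 2 - 1 ≠ 0 := by linarith
  field_simp
end
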